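/- Let g : ℝ^n → ℝ be a smooth nowhere-vanishing function. For every subset J' ⊆ {1,…,n} define a^g_{J'} = Σ_{K'⊆J'} a_{J'∖K'} · (g^{-1}·∂_{K'} g). Then for every subset J ⊆ {1,…,n} and every smooth f : ℝ^n → ℝ, the conjugated operator satisfies g^{-1}·L_J(g·f) = Σ_{K⊆J} a^g_{J∖K} · ∂_K f. In particular, conjugation by g preserves the form of L_J, and the transformed coefficient a^g_{J'} depends only on the index set J' and not on which operator L_J it appears in. -/

import Mathlib

/-!
The heart of the matter is the Leibniz rule for square-free mixed partials,
`∂_J (g f) = Σ_{K ⊆ J} ∂_K g · ∂_{J∖K} f` (`pdSet_mul`). It is proved by adding indices to `J` one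
at a time, always a new minimum: since `pdSet` applies the smallest index last, `∂_{insert i K}` is
then literally `∂_i ∂_K` for every `K ⊆ J` (`pdSet_insert`), and symmetry of second derivatives is
never needed.

Substituting the Leibniz rule into `g⁻¹ L_J (g f)` gives a sum over pairs `M ⊆ K ⊆ J` of
`a_{J∖K} · g⁻¹ ∂_M g · ∂_{K∖M} f`. The change of variables `(K, M) ↦ (K∖M, M)` turns it into a sum
over `K ⊆ J` and `M ⊆ J∖K` of `a_{(J∖K)∖M} · g⁻¹ ∂_M g · ∂_K f`, and the inner sum over `M` is
`a^g_{J∖K} · ∂_K f`.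
-/

/-- The `i`-th partial derivative of a function on `ℝⁿ`. -/
noncomputable def pd {n : ℕ} (i : Fin n) (f : (Fin n → ℝ) → ℝ) : (Fin n → ℝ) → ℝ :=
  fun x => fderiv ℝ f x (Pi.single i 1)

/-- The composite partial derivative `∂_J = ∏_{i ∈ J} ∂_i` over a subset `J`. -/
noncomputable def pdSet {n : ℕ} (J : Finset (Fin n)) (f : (Fin n → ℝ) → ℝ) :
    (Fin n → ℝ) → ℝ :=
  (J.sort (· ≤ ·)).foldr pd f

/-- The operator `L_J f = Σ_{K ⊆ J} a_{J∖K} · ∂_K f`. -/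
noncomputable def Lop {n : ℕ} (a : Finset (Fin n) → (Fin n → ℝ) → ℝ)
    (J : Finset (Fin n)) (f : (Fin n → ℝ) → ℝ) : (Fin n → ℝ) → ℝ :=
  fun x => ∑ K ∈ J.powerset, a (J \ K) x * pdSet K f x

lemma pdSet_empty {n : ℕ} (f : (Fin n → ℝ) → ℝ) : pdSet ∅ f = f := by
  simp [pdSet]

/-- The index `i` must lie below `s`, so that it heads the sorted list and `∂_i` is applied last. -/
lemma pdSet_insert {n : ℕ} {i : Fin n} {s : Finset (Fin n)} (h : ∀ j ∈ s, i < j)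
    (f : (Fin n → ℝ) → ℝ) : pdSet (insert i s) f = pd i (pdSet s f) := by
  have hi : i ∉ s := fun hi => lt_irrefl _ (h i hi)
  rw [pdSet, Finset.sort_insert _ (fun b hb => (h b hb).le) hi]
  rfl

lemma contDiff_pd {n : ℕ} (i : Fin n) {f : (Fin n → ℝ) → ℝ}
    (hf : ContDiff ℝ (⊤ : ℕ∞) f) : ContDiff ℝ (⊤ : ℕ∞) (pd i f) :=
  (hf.fderiv_right (m := ((⊤ : ℕ∞) : WithTop ℕ∞)) (by simp)).clm_apply contDiff_const

lemma contDiff_pdSet {n : ℕ} (J : Finset (Fin n)) {f : (Fin n → ℝ) → ℝ}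
    (hf : ContDiff ℝ (⊤ : ℕ∞) f) : ContDiff ℝ (⊤ : ℕ∞) (pdSet J f) := by
  induction J using Finset.induction_on_min with
  | empty => rwa [pdSet_empty]
  | insert i s h ih =>
    rw [pdSet_insert h]
    exact contDiff_pd i ih

lemma pd_sum_mul {n : ℕ} {ι : Type*} (i : Fin n) (S : Finset ι)
    (u v : ι → (Fin n → ℝ) → ℝ) (hu : ∀ k, ContDiff ℝ (⊤ : ℕ∞) (u k))
    (hv : ∀ k, ContDiff ℝ (⊤ : ℕ∞) (v k)) (x : Fin n → ℝ) :
    pd i (fun y => ∑ k ∈ S, u k y * v k y) x =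
      ∑ k ∈ S, u k x * pd i (v k) x + ∑ k ∈ S, pd i (u k) x * v k x := by
  have hu' : ∀ k, DifferentiableAt ℝ (u k) x := fun k =>
    (hu k).differentiable (by simp) x
  have hv' : ∀ k, DifferentiableAt ℝ (v k) x := fun k =>
    (hv k).differentiable (by simp) x
  unfold pd
  rw [fderiv_fun_sum fun k _ => (hu' k).fun_mul (hv' k), ← Finset.sum_add_distrib,
    ContinuousLinearMap.sum_apply]
  refine Finset.sum_congr rfl fun k _ => ?_
  rw [fderiv_fun_mul (hu' k) (hv' k)]
  simp [mul_comm]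

/-- Leibniz rule for square-free mixed partial derivatives. -/
lemma pdSet_mul {n : ℕ} {g f : (Fin n → ℝ) → ℝ} (hg : ContDiff ℝ (⊤ : ℕ∞) g)
    (hf : ContDiff ℝ (⊤ : ℕ∞) f) (J : Finset (Fin n)) :
    pdSet J (fun y => g y * f y) =
      fun x => ∑ K ∈ J.powerset, pdSet K g x * pdSet (J \ K) f x := by
  induction J using Finset.induction_on_min with
  | empty => simp [pdSet_empty]
  | insert i s h ih =>
    have hi : i ∉ s := fun hi => lt_irrefl _ (h i hi)
    funext x
    rw [pdSet_insert h, ih, pd_sum_mul i _ (fun K => pdSet K g) (fun K => pdSet (s \ K) f)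
      (fun K => contDiff_pdSet K hg) (fun K => contDiff_pdSet _ hf),
      Finset.sum_powerset_insert hi]
    -- `∂_i` falls on `f` when `i` is outside the subset, and on `g` when it is inside.
    congr 1
    · refine Finset.sum_congr rfl fun K hK => ?_
      have hKs := Finset.mem_powerset.1 hK
      rw [Finset.insert_sdiff_of_notMem _ fun hiK => hi (hKs hiK),
        pdSet_insert fun j hj => h j (Finset.mem_sdiff.1 hj).1]
    · refine Finset.sum_congr rfl fun K hK => ?_
      have hKs := Finset.mem_powerset.1 hK
      have hs : insert i s \ insert i K = s \ K := by
        rw [Finset.insert_sdiff_insert, Finset.sdiff_insert_of_notMem hi]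
      rw [hs, pdSet_insert fun j hj => h j (hKs hj)]

/-- Chains `M ⊆ K ⊆ J` correspond to pairs of disjoint subsets of `J` via
`(K, M) ↦ (K \ M, M)`. -/
lemma sum_chain_eq_sum_disjoint {α : Type*} [DecidableEq α] (J : Finset α)
    (F : Finset α → Finset α → Finset α → ℝ) :
    ∑ K ∈ J.powerset, ∑ M ∈ K.powerset, F (J \ K) M (K \ M) =
      ∑ K ∈ J.powerset, ∑ M ∈ (J \ K).powerset, F ((J \ K) \ M) M K := by
  rw [Finset.sum_sigma', Finset.sum_sigma']
  refine Finset.sum_bij' (fun p _ => ⟨p.1 \ p.2, p.2⟩) (fun p _ => ⟨p.1 ∪ p.2, p.2⟩)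
    ?_ ?_ ?_ ?_ ?_
  all_goals
    rintro ⟨K, M⟩ hp
    simp only [Finset.mem_sigma, Finset.mem_powerset] at hp ⊢
    obtain ⟨h1, h2⟩ := hp
  · constructor <;> intro j hj <;> grind
  · constructor <;> intro j hj <;> grind
  · rw [Finset.sdiff_union_of_subset h2]
  · rw [Finset.union_sdiff_cancel_right (Finset.disjoint_left.2 fun j hj hM => by grind)]
  · congr 1
    ext j
    grind

/-- with `a^g_{J'} = Σ_{K'⊆J'} a_{J'∖K'} · (g⁻¹·∂_{K'} g)`, conjugation
preserves the form of `L_J`: `g⁻¹·L_J(g·f) = Σ_{K⊆J} a^g_{J∖K} · ∂_K f`. -/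
theorem conjugation_preserves_form {n : ℕ} (hn : 1 ≤ n)
    (a : Finset (Fin n) → (Fin n → ℝ) → ℝ)
    (ha : ∀ K, ContDiff ℝ (⊤ : ℕ∞) (a K)) (ha0 : a ∅ = fun _ => 1)
    (g : (Fin n → ℝ) → ℝ) (hg : ContDiff ℝ (⊤ : ℕ∞) g) (hg0 : ∀ x, g x ≠ 0)
    (ag : Finset (Fin n) → (Fin n → ℝ) → ℝ)
    (hag : ∀ J' x, ag J' x =
      ∑ K' ∈ J'.powerset, a (J' \ K') x * ((g x)⁻¹ * pdSet K' g x))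
    (J : Finset (Fin n)) (f : (Fin n → ℝ) → ℝ) (hf : ContDiff ℝ (⊤ : ℕ∞) f)
    (x : Fin n → ℝ) :
    (g x)⁻¹ * Lop a J (fun y => g y * f y) x =
      ∑ K ∈ J.powerset, ag (J \ K) x * pdSet K f x := by
  have hgf : ∀ K, pdSet K (fun y => g y * f y) x =
      ∑ M ∈ K.powerset, pdSet M g x * pdSet (K \ M) f x := fun K => by
    rw [pdSet_mul hg hf]
  simp only [Lop, hgf, hag, Finset.mul_sum, Finset.sum_mul]
  rw [← sum_chain_eq_sum_disjoint J
    (fun A M K => a A x * ((g x)⁻¹ * pdSet M g x) * pdSet K f x)]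
  refine Finset.sum_congr rfl fun K _ => Finset.sum_congr rfl fun M _ => ?_
  ring
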